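/- Let X be a Banach space, T > 0, F ∈ C^6([0,T] × X, X) satisfying ‖F(t,x) − F(t,y)‖ ≤ μ‖x − y‖ for some μ ≥ 0 and all (t,x,y) ∈ [0,T] × X × X, and suppose the initial value problem u'(t) = F(t, u(t)) on [0,T], u(0) = u₀, has a unique solution u ∈ C^7([0,T], X). Then there exist constants C > 0 and k₀ > 0 such that for every positive integer N with k = T/N ≤ k₀, the sequence {u^{6,n}}_{n=0}^{N} produced by the DC6RK2/4 scheme satisfies ‖u^{6,n} − u(t_n)‖ ≤ C k^6 for all n = 0, 1, …, N, where t_n = nk. -/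

import Mathlib

open Finset

variable {X : Type*} [NormedAddCommGroup X] [NormedSpace ℝ X] [CompleteSpace X]

/-- One step of the classical fourth-order Runge–Kutta method for `u' = F(t,u)`
from time `t` with step `h`. -/
noncomputable def rk4Step (F : ℝ → X → X) (t h : ℝ) (x : X) : X :=
  let K1 := F t x
  let K2 := F (t + h / 2) (x + (h / 2) • K1)
  let K3 := F (t + h / 2) (x + (h / 2) • K2)
  let K4 := F (t + h) (x + h • K3)
  x + (h / 6) • (K1 + (2 : ℝ) • K2 + (2 : ℝ) • K3 + K4)

/-- `i` steps of RK4 with step `h`, starting from `x` at time `t`: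
`rk4Iter F t h x i` is the approximation `u^{4,·,i}` of `u(t + i h)`. -/
noncomputable def rk4Iter (F : ℝ → X → X) (t h : ℝ) (x : X) : ℕ → X
  | 0 => x
  | i + 1 => rk4Step F (t + (i : ℝ) * h) h (rk4Iter F t h x i)

/-- The correction term `aₙ` of the DC6RK2/4 scheme, as a linear combination of the
six RK4 sub-step values `w 0, …, w 5`. -/
noncomputable def dcA (w : ℕ → X) : X :=
  (125 / 384 : ℝ) • ((-3 : ℝ) • w 0 - w 1 + (18 : ℝ) • w 2 - (18 : ℝ) • w 3
    + w 4 + (3 : ℝ) • w 5)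

/-- The correction term `bₙ` of the DC6RK2/4 scheme, as a linear combination of the
six RK4 sub-step values `w 0, …, w 5`. -/
noncomputable def dcB (w : ℕ → X) : X :=
  (25 / 768 : ℝ) • ((145 : ℝ) • w 0 - (387 : ℝ) • w 1 + (402 : ℝ) • w 2
    - (238 : ℝ) • w 3 + (93 : ℝ) • w 4 - (15 : ℝ) • w 5)

/-- One step of the hybrid deferred-correction scheme DC6RK2/4 from time `t` with
step `k` (inner RK4 step `h = k/5`). -/
noncomputable def dcStep (F : ℝ → X → X) (t k : ℝ) (x : X) : X :=
  let w : ℕ → X := rk4Iter F t (k / 5) x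
  x + dcA w + k • F (t + k / 2) (x + (k / 2) • F t x + dcB w)

/-- The DC6RK2/4 sequence `u^{6,n}` for `u' = F(t,u)`, `u(0) = u₀`, with step `k`. -/
noncomputable def dcSeq (F : ℝ → X → X) (u0 : X) (k : ℝ) : ℕ → X
  | 0 => u0
  | n + 1 => dcStep F ((n : ℝ) * k) k (dcSeq F u0 k n)

/-!
Along a smooth solution, `F` has a uniform second-order expansion, so the error of `i` RK4 sub-steps
of length `k / 5` started on the solution expands as `k⁵ i φ + k⁶ (i.choose 2 • χ + i ψ) + O(k⁷)`:
to this order it is a quadratic polynomial in `i`, with linear leading part. The weights of `aₙ`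
annihilate quadratic sequences and those of `bₙ` linear ones, while on exact values they reproduce
the local defects of the midpoint rule and of the Euler half-step; hence one step has error `O(k⁷)`.
The weights also annihilate constants, so the increment of a step is Lipschitz with constant `O(k)`,
and the discrete Gronwall inequality turns local order seven into global order six.
-/

section Taylor

open Set

variable {E : Type*} [NormedAddCommGroup E] [NormedSpace ℝ E]

/-- The Taylor sum `∑ j < n, hʲ / j! • c j` with prescribed derivatives `c j` at the centre,
evaluated at displacement `h` from it. -/
noncomputable def taylorSum (n : ℕ) (c : ℕ → E) (h : ℝ) : E :=
  ∑ j ∈ range n, (h ^ j / (j.factorial : ℝ)) • c j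

theorem taylorSum_succ_zero (n : ℕ) (c : ℕ → E) : taylorSum (n + 1) c 0 = c 0 := by
  simp [taylorSum, sum_range_succ']

theorem hasDerivAt_taylorSum_succ (n : ℕ) (c : ℕ → E) (h : ℝ) :
    HasDerivAt (taylorSum (n + 1) c) (taylorSum n (fun j => c (j + 1)) h) h := by
  have hasDerivAt_monomial (j : ℕ) : HasDerivAt
      (fun x : ℝ => x ^ (j + 1) / ((j + 1).factorial : ℝ)) (h ^ j / (j.factorial : ℝ)) h := by
    refine ((hasDerivAt_pow (j + 1) h).div_const _).congr_deriv ?_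
    rw [Nat.factorial_succ, Nat.add_sub_cancel]
    push_cast
    field_simp
  have hasDerivAt_sum : HasDerivAt
      (fun x : ℝ => ∑ j ∈ range n, (x ^ (j + 1) / ((j + 1).factorial : ℝ)) • c (j + 1) + c 0)
      (taylorSum n (fun j => c (j + 1)) h) h :=
    (HasDerivAt.fun_sum fun j _ => (hasDerivAt_monomial j).smul_const _).add_const _
  refine hasDerivAt_sum.congr_of_eventuallyEq (.of_forall fun x => ?_)
  simp [taylorSum, sum_range_succ']

theorem norm_sub_taylorSum_le {s : Set ℝ} (hs : Convex ℝ s) {M : ℝ} {n : ℕ} {v : ℕ → ℝ → E}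
    (hv : ∀ j < n, ∀ x ∈ s, HasDerivWithinAt (v j) (v (j + 1) x) s x)
    (hM : ∀ x ∈ s, ‖v n x‖ ≤ M) {x y : ℝ} (hx : x ∈ s) (hy : y ∈ s) :
    ‖v 0 y - taylorSum n (fun j => v j x) (y - x)‖ ≤ M * |y - x| ^ n := by
  induction n generalizing v y with
  | zero => simpa [taylorSum] using hM y hy
  | succ n ih =>
    have segment_subset : segment ℝ x y ⊆ s := hs.segment_subset hx hy
    have hasDeriv_remainder : ∀ z ∈ segment ℝ x y, HasDerivWithinAt
        (fun z => v 0 z - taylorSum (n + 1) (fun j => v j x) (z - x))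
        (v 1 z - taylorSum n (fun j => v (j + 1) x) (z - x)) (segment ℝ x y) z := fun z hz =>
      ((hv 0 n.succ_pos z (segment_subset hz)).mono segment_subset).sub
        ((hasDerivAt_taylorSum_succ n _ _).comp_sub_const z x).hasDerivWithinAt
    have norm_deriv_le : ∀ z ∈ segment ℝ x y,
        ‖v 1 z - taylorSum n (fun j => v (j + 1) x) (z - x)‖ ≤ M * |y - x| ^ n := fun z hz => by
      have hM_nonneg : 0 ≤ M := (norm_nonneg _).trans (hM x hx)
      have abs_le : |z - x| ≤ |y - x| := abs_sub_left_of_mem_uIcc (segment_eq_uIcc x y ▸ hz)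
      refine (ih (v := fun j => v (j + 1)) (fun j hj => hv (j + 1) (by lia)) hM
        (segment_subset hz)).trans ?_
      gcongr
    have mean_value := (convex_segment x y).norm_image_sub_le_of_norm_hasDerivWithin_le
      hasDeriv_remainder norm_deriv_le (left_mem_segment ℝ x y) (right_mem_segment ℝ x y)
    simpa [taylorSum_succ_zero, pow_succ, mul_assoc] using mean_value

theorem contDiffOn_iteratedDerivWithin {s : Set ℝ} (hs : UniqueDiffOn ℝ s) {v : ℝ → E} {j m : ℕ}
    (hv : ContDiffOn ℝ (m + j : ℕ) v s) : ContDiffOn ℝ m (iteratedDerivWithin j v s) s := by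
  induction j generalizing m with
  | zero => simpa using hv
  | succ j ih =>
    rw [iteratedDerivWithin_succ]
    exact ContDiffOn.derivWithin (ih (m := m + 1) (by convert hv using 2; lia)) hs (by simp)

theorem exists_norm_sub_taylorSum_iteratedDerivWithin_le {s : Set ℝ} (hs : Convex ℝ s)
    (hs_compact : IsCompact s) (hs_unique : UniqueDiffOn ℝ s) {v : ℝ → E} {n : ℕ}
    (hv : ContDiffOn ℝ n v s) : ∃ M : ℝ, ∀ x ∈ s, ∀ y ∈ s,
      ‖v y - taylorSum n (fun j => iteratedDerivWithin j v s x) (y - x)‖ ≤ M * |y - x| ^ n := by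
  obtain ⟨M, hM⟩ := hs_compact.exists_bound_of_continuousOn
    (hv.continuousOn_iteratedDerivWithin le_rfl hs_unique)
  refine ⟨M, fun x hx y hy => ?_⟩
  have hasDeriv : ∀ j < n, ∀ x ∈ s, HasDerivWithinAt (iteratedDerivWithin j v s)
      (iteratedDerivWithin (j + 1) v s x) s x := fun j hj x hx => by
    rw [iteratedDerivWithin_succ]
    exact (hv.differentiableOn_iteratedDerivWithin (by exact_mod_cast hj) hs_unique x
      hx).hasDerivWithinAt
  simpa using norm_sub_taylorSum_le hs hasDeriv hM hx hy

end Taylor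

section QuadraticExpansion

open Set Filter Asymptotics Topology

variable {P E G : Type*} [NormedAddCommGroup P] [NormedSpace ℝ P]
  [NormedAddCommGroup E] [NormedSpace ℝ E] [NormedAddCommGroup G] [NormedSpace ℝ G]

theorem exists_contDiffOn_partial_fderiv {s : Set P} (hs : UniqueDiffOn ℝ s) {n : ℕ}
    {f : P × G → E} (hf : ContDiffOn ℝ (n + 1 : ℕ) f (s ×ˢ univ)) :
    ∃ f' : P × G → G →L[ℝ] E, ContDiffOn ℝ n f' (s ×ˢ univ) ∧
      ∀ p ∈ s, ∀ x, HasFDerivAt (fun y => f (p, y)) (f' (p, x)) x := by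
  refine ⟨fun q => (fderivWithin ℝ f (s ×ˢ univ) q).comp (ContinuousLinearMap.inr ℝ P G),
    (hf.fderivWithin (hs.prod uniqueDiffOn_univ) (by simp)).clm_comp contDiffOn_const,
    fun p hp x => ?_⟩
  rw [← hasFDerivWithinAt_univ]
  exact (hf.differentiableOn (by simp) (p, x) ⟨hp, trivial⟩).hasFDerivWithinAt.comp x
    (hasFDerivAt_prodMk_right p x).hasFDerivWithinAt fun y _ => ⟨hp, trivial⟩

theorem exists_norm_le_near_graph {P E G : Type*} [PseudoMetricSpace P] [SeminormedAddCommGroup E]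
    [SeminormedAddCommGroup G] {s : Set P} (hs : IsCompact s) {u : P → G}
    (hu : ContinuousOn u s) {f : P × G → E} (hf : ContinuousOn f (s ×ˢ univ)) :
    ∃ r > 0, ∃ M : ℝ, ∀ p ∈ s, ∀ δ : G, ‖δ‖ < r → ‖f (p, u p + δ)‖ ≤ M := by
  have graph_compact : IsCompact ((fun p => (p, u p)) '' s) :=
    hs.image_of_continuousOn (continuousOn_id.prodMk hu)
  have graph_subset : (fun p => (p, u p)) '' s ⊆ s ×ˢ univ := by
    rintro _ ⟨p, hp, rfl⟩
    exact ⟨hp, trivial⟩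
  obtain ⟨t, graph_subset_t, t_open, bounded_on_t⟩ :=
    Metric.exists_isOpen_isBounded_image_inter_of_isCompact_of_continuousOn
      graph_compact graph_subset hf
  obtain ⟨r, hr, thickening_subset⟩ :=
    graph_compact.exists_thickening_subset_open t_open graph_subset_t
  obtain ⟨M, hM⟩ := bounded_on_t.exists_norm_le
  refine ⟨r, hr, M, fun p hp δ hδ => hM _ ⟨_, ⟨thickening_subset ?_, hp, trivial⟩, rfl⟩⟩
  exact Metric.mem_thickening_iff.2 ⟨_, mem_image_of_mem _ hp, by simpa [Prod.dist_eq] using hδ⟩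

set_option maxSynthPendingDepth 4 in
theorem norm_sub_quadratic_le {f : G → E} {f₁ : G → G →L[ℝ] E} {f₂ : G → G →L[ℝ] G →L[ℝ] E}
    {f₃ : G → G →L[ℝ] G →L[ℝ] G →L[ℝ] E} (h₁ : ∀ x, HasFDerivAt f (f₁ x) x)
    (h₂ : ∀ x, HasFDerivAt f₁ (f₂ x) x) (h₃ : ∀ x, HasFDerivAt f₂ (f₃ x) x) {x δ : G} {M : ℝ}
    (hM : ∀ τ ∈ Icc (0 : ℝ) 1, ‖f₃ (x + τ • δ)‖ ≤ M) :
    ‖f (x + δ) - (f x + f₁ x δ + (1 / 2 : ℝ) • f₂ x δ δ)‖ ≤ M * ‖δ‖ ^ 3 := by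
  let v : ℕ → ℝ → E
    | 0, τ => f (x + τ • δ)
    | 1, τ => f₁ (x + τ • δ) δ
    | 2, τ => f₂ (x + τ • δ) δ δ
    | _, τ => f₃ (x + τ • δ) δ δ δ
  have hasDerivAt_line (τ : ℝ) : HasDerivAt (fun τ : ℝ => x + τ • δ) δ τ := by
    simpa using ((hasDerivAt_id τ).smul_const δ).const_add x
  have hasDerivWithinAt_v : ∀ j < 3, ∀ τ ∈ Icc (0 : ℝ) 1,
      HasDerivWithinAt (v j) (v (j + 1) τ) (Icc 0 1) τ := by
    intro j hj τ _
    refine HasDerivAt.hasDerivWithinAt ?_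
    interval_cases j
    · exact (h₁ _).comp_hasDerivAt τ (hasDerivAt_line τ)
    · exact (((h₂ _).comp_hasDerivAt τ (hasDerivAt_line τ)).clm_apply
        (hasDerivAt_const τ δ)).congr_deriv (by simp [v])
    · exact ((((h₃ _).comp_hasDerivAt τ (hasDerivAt_line τ)).clm_apply
        (hasDerivAt_const τ δ)).clm_apply (hasDerivAt_const τ δ)).congr_deriv (by simp [v])
  have norm_v_three_le : ∀ τ ∈ Icc (0 : ℝ) 1, ‖v 3 τ‖ ≤ M * ‖δ‖ ^ 3 := fun τ hτ => by
    calc ‖f₃ (x + τ • δ) δ δ δ‖ ≤ M * ‖δ‖ * ‖δ‖ * ‖δ‖ :=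
          ContinuousLinearMap.le_of_opNorm_le _ (ContinuousLinearMap.le_of_opNorm_le _
            (ContinuousLinearMap.le_of_opNorm_le _ (hM τ hτ) δ) δ) δ
      _ = M * ‖δ‖ ^ 3 := by ring
  simpa [v, taylorSum, sum_range_succ, Nat.factorial, smul_smul] using
    norm_sub_taylorSum_le (convex_Icc 0 1) hasDerivWithinAt_v norm_v_three_le
      (left_mem_Icc.2 zero_le_one) (right_mem_Icc.2 zero_le_one)

theorem exists_quadratic_expansion_along {s : Set P} (hs : IsCompact s)
    (hs_unique : UniqueDiffOn ℝ s) {n : ℕ} {F : P → G → E}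
    (hF : ContDiffOn ℝ (n + 3 : ℕ) (Function.uncurry F) (s ×ˢ univ)) {u : P → G}
    (hu : ContDiffOn ℝ (n + 1 : ℕ) u s) :
    ∃ (A : P → G →L[ℝ] E) (B : P → G →L[ℝ] G →L[ℝ] E),
      ContDiffOn ℝ (n + 1 : ℕ) A s ∧ ContDiffOn ℝ (n + 1 : ℕ) B s ∧
      (fun q : P × G => F q.1 (u q.1 + q.2)
        - (F q.1 (u q.1) + A q.1 q.2 + (1 / 2 : ℝ) • B q.1 q.2 q.2))
        =O[𝓟 s ×ˢ 𝓝 0] fun q => ‖q.2‖ ^ 3 := by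
  obtain ⟨f₁, f₁_contDiff, hf₁⟩ := exists_contDiffOn_partial_fderiv hs_unique hF
  obtain ⟨f₂, f₂_contDiff, hf₂⟩ := exists_contDiffOn_partial_fderiv hs_unique f₁_contDiff
  obtain ⟨f₃, f₃_contDiff, hf₃⟩ := exists_contDiffOn_partial_fderiv hs_unique f₂_contDiff
  obtain ⟨r, hr, M, hM⟩ := exists_norm_le_near_graph hs hu.continuousOn f₃_contDiff.continuousOn
  have graph_contDiff : ContDiffOn ℝ (n + 1 : ℕ) (fun p => (p, u p)) s :=
    contDiffOn_id.prodMk hu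
  have graph_mapsTo : MapsTo (fun p => (p, u p)) s (s ×ˢ univ) := fun p hp => ⟨hp, trivial⟩
  refine ⟨fun p => f₁ (p, u p), fun p => f₂ (p, u p),
    (f₁_contDiff.of_le (by norm_cast; lia)).comp graph_contDiff graph_mapsTo,
    f₂_contDiff.comp graph_contDiff graph_mapsTo, IsBigO.of_bound M ?_⟩
  filter_upwards [prod_mem_prod (mem_principal_self s) (Metric.ball_mem_nhds 0 hr)]
    with ⟨p, δ⟩ ⟨hp, hδ⟩
  rw [norm_pow, norm_norm]
  refine norm_sub_quadratic_le (hf₁ p hp) (hf₂ p hp) (hf₃ p hp) fun τ hτ => hM p hp _ ?_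
  calc ‖τ • δ‖ = τ * ‖δ‖ := by rw [norm_smul, Real.norm_of_nonneg hτ.1]
    _ ≤ ‖δ‖ := mul_le_of_le_one_left (norm_nonneg δ) hτ.2
    _ < r := by simpa using hδ

end QuadraticExpansion

section BigO

open Set Filter Asymptotics Topology

variable {ι E G : Type*} [NormedAddCommGroup E] [NormedSpace ℝ E] [NormedAddCommGroup G]
  [NormedSpace ℝ G] {l : Filter ι} {h : ι → ℝ}

theorem isBigO_pow_of_le_of_tendsto_zero (hh : Tendsto h l (𝓝 0)) {m n : ℕ} (hmn : n ≤ m) :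
    (fun i => h i ^ m) =O[l] fun i => h i ^ n := by
  obtain ⟨k, rfl⟩ := Nat.exists_eq_add_of_le hmn
  simpa [pow_add] using (isBigO_refl (fun i => h i ^ n) l).mul ((hh.pow k).isBigO_one ℝ)

theorem isBigO_pow_smul {w : ι → E} {m : ℕ} (hw : w =O[l] fun i => h i ^ m) (n : ℕ) :
    (fun i => h i ^ n • w i) =O[l] fun i => h i ^ (n + m) := by
  simpa [pow_add] using (isBigO_refl (fun i => h i ^ n) l).smul hw

theorem isBigO_pow_smul_of_isBigO_one {w : ι → E} (hw : w =O[l] fun _ => (1 : ℝ)) (n : ℕ) :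
    (fun i => h i ^ n • w i) =O[l] fun i => h i ^ n := by
  simpa using (isBigO_refl (fun i => h i ^ n) l).smul hw

theorem isBigO_const_mul_smul (c : ℝ) {w : ι → E} {m : ℕ} (hw : w =O[l] fun i => h i ^ m) :
    (fun i => (c * h i) • w i) =O[l] fun i => h i ^ (m + 1) := by
  simpa [pow_succ'] using ((isBigO_refl h l).const_mul_left c).smul hw

theorem isBigO_clm_apply {A : ι → G →L[ℝ] E} {x : ι → G} {α β : ι → ℝ} (hA : A =O[l] α)
    (hx : x =O[l] β) : (fun i => A i (x i)) =O[l] fun i => α i * β i :=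
  (IsBigO.of_bound 1 (.of_forall fun i => by simpa using (A i).le_opNorm (x i))).trans
    (hA.norm_left.mul hx.norm_left)

theorem isBigO_one_comp_of_isCompact {α E : Type*} [TopologicalSpace α]
    [SeminormedAddCommGroup E] {s : Set α} (hs : IsCompact s) {v : α → E} (hv : ContinuousOn v s)
    {σ : ι → α} (hσ : ∀ᶠ i in l, σ i ∈ s) : (fun i => v (σ i)) =O[l] fun _ => (1 : ℝ) := by
  obtain ⟨M, hM⟩ := hs.exists_bound_of_continuousOn hv
  exact IsBigO.of_bound M (hσ.mono fun i hi => by simpa using hM _ hi)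

theorem isBigO_sub_taylorSum {a b : ℝ} (hab : a < b) {v : ℝ → E} {n : ℕ}
    (hv : ContDiffOn ℝ n v (Icc a b)) {σ t : ι → ℝ} (hσ : ∀ᶠ i in l, σ i ∈ Icc a b)
    (ht : ∀ᶠ i in l, t i ∈ Icc a b) (hσt : (fun i => σ i - t i) =O[l] h) :
    (fun i => v (σ i)
      - taylorSum n (fun j => iteratedDerivWithin j v (Icc a b) (t i)) (σ i - t i))
      =O[l] fun i => h i ^ n := by
  obtain ⟨M, hM⟩ := exists_norm_sub_taylorSum_iteratedDerivWithin_le (convex_Icc a b)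
    isCompact_Icc (uniqueDiffOn_Icc hab) hv
  refine IsBigO.trans (IsBigO.of_bound M ?_) (hσt.pow n)
  filter_upwards [hσ, ht] with i hσi hti
  simpa using hM _ hti _ hσi

end BigO

section StepExpansion

open Set Filter Asymptotics Topology

/-- The pairs `(t, h)` of a starting time and a step for which the step from `t` to `t + h` stays
inside `[0, T]`. -/
def stepTriangle (T : ℝ) : Set (ℝ × ℝ) :=
  {p | 0 ≤ p.1 ∧ 0 ≤ p.2 ∧ p.1 + p.2 ≤ T}

/-- The filter of admissible pairs `(t, h)` with `h → 0`; being `O(hⁿ)` along it means uniformly in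
the starting time `t`. -/
def stepFilter (T : ℝ) : Filter (ℝ × ℝ) :=
  𝓟 (stepTriangle T) ⊓ comap Prod.snd (𝓝 0)

variable {T : ℝ}

theorem add_mul_mem_Icc_of_mem_stepTriangle {p : ℝ × ℝ} (hp : p ∈ stepTriangle T) {α : ℝ}
    (hα : α ∈ Icc (0 : ℝ) 1) : p.1 + α * p.2 ∈ Icc 0 T := by
  obtain ⟨time_nonneg, step_nonneg, end_le⟩ := hp
  exact ⟨add_nonneg time_nonneg (mul_nonneg hα.1 step_nonneg),
    (add_le_add_right (mul_le_of_le_one_left step_nonneg hα.2) _).trans end_le⟩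

theorem fst_mem_Icc_of_mem_stepTriangle {p : ℝ × ℝ} (hp : p ∈ stepTriangle T) :
    p.1 ∈ Icc 0 T := by
  simpa using add_mul_mem_Icc_of_mem_stepTriangle hp unitInterval.zero_mem

theorem eventually_mem_stepTriangle (T : ℝ) : ∀ᶠ p in stepFilter T, p ∈ stepTriangle T :=
  mem_inf_of_left (mem_principal_self _)

theorem tendsto_snd_stepFilter (T : ℝ) : Tendsto Prod.snd (stepFilter T) (𝓝 0) :=
  tendsto_comap.mono_left inf_le_right

theorem tendsto_stepFilter_iff {ι : Type*} {l : Filter ι} {f : ι → ℝ × ℝ} :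
    Tendsto f l (stepFilter T) ↔
      (∀ᶠ i in l, f i ∈ stepTriangle T) ∧ Tendsto (fun i => (f i).2) l (𝓝 0) := by
  rw [stepFilter, tendsto_inf, tendsto_principal, tendsto_comap_iff, Function.comp_def]

theorem substep_mem_stepTriangle {p : ℝ × ℝ} (hp : p ∈ stepTriangle T) {α β : ℝ} (hα : 0 ≤ α)
    (hβ : 0 ≤ β) (hαβ : α + β ≤ 1) : (p.1 + α * p.2, β * p.2) ∈ stepTriangle T := by
  obtain ⟨time_nonneg, step_nonneg, end_le⟩ := hp
  refine ⟨by positivity, by positivity, ?_⟩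
  calc p.1 + α * p.2 + β * p.2 = p.1 + (α + β) * p.2 := by ring
    _ ≤ p.1 + p.2 := by gcongr; exact mul_le_of_le_one_left step_nonneg hαβ
    _ ≤ T := end_le

theorem tendsto_substep_stepFilter (T : ℝ) {α β : ℝ} (hα : 0 ≤ α) (hβ : 0 ≤ β)
    (hαβ : α + β ≤ 1) :
    Tendsto (fun p : ℝ × ℝ => (p.1 + α * p.2, β * p.2)) (stepFilter T) (stepFilter T) :=
  tendsto_stepFilter_iff.2
    ⟨(eventually_mem_stepTriangle T).mono fun _ hp => substep_mem_stepTriangle hp hα hβ hαβ,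
      by simpa using (tendsto_snd_stepFilter T).const_mul β⟩

variable {E G : Type*} [NormedAddCommGroup E] [NormedSpace ℝ E] [NormedAddCommGroup G]
  [NormedSpace ℝ G]

theorem clm_apply_truncated_product (n : ℕ) (h : ℝ) (a : ℕ → G →L[ℝ] E) (b : ℕ → G) :
    (∑ i ∈ range n, h ^ i • a i) (∑ j ∈ range n, h ^ j • b j) =
      ∑ j ∈ range n, h ^ j • ∑ i ∈ range (j + 1), a i (b (j - i)) +
      ∑ i ∈ range n, ∑ j ∈ Finset.Ico (n - i) n, h ^ (i + j) • a i (b j) := by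
  have diagonal : ∑ j ∈ range n, h ^ j • ∑ i ∈ range (j + 1), a i (b (j - i)) =
      ∑ i ∈ range n, ∑ j ∈ range (n - i), h ^ (i + j) • a i (b j) := by
    rw [← sum_range_diag_flip n fun i j => h ^ (i + j) • a i (b j)]
    refine sum_congr rfl fun j _ => smul_sum.trans (sum_congr rfl fun i hi => ?_)
    rw [Nat.add_sub_cancel' (Nat.lt_succ_iff.1 (Finset.mem_range.1 hi))]
  rw [diagonal, ← sum_add_distrib, _root_.sum_apply]
  refine sum_congr rfl fun i _ => ?_
  rw [sum_range_add_sum_Ico _ (n.sub_le i), map_sum]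
  simp only [_root_.smul_apply, map_smul, smul_smul, pow_add, mul_comm]

/-- `f (t, h) = hᵐ (a₀(t) + h a₁(t) + ⋯ + hⁿ⁻¹ aₙ₋₁(t)) + O(hᵐ⁺ⁿ)` uniformly in `t`, where `aⱼ` is
of class `Cⁿ⁻ʲ` on `[0, T]`, the regularity that Taylor expansion of a `Cᵐ⁺ⁿ` function provides. -/
structure HasStepExpansion (T : ℝ) (m n : ℕ) (f : ℝ × ℝ → E) (a : ℕ → ℝ → E) : Prop where
  contDiffOn : ∀ j < n, ContDiffOn ℝ (n - j : ℕ) (a j) (Icc 0 T)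
  isBigO_remainder : (fun p => f p - p.2 ^ m • ∑ j ∈ range n, p.2 ^ j • a j p.1)
    =O[stepFilter T] fun p => p.2 ^ (m + n)

namespace HasStepExpansion

variable {m n k : ℕ} {f g : ℝ × ℝ → E} {a b : ℕ → ℝ → E}

theorem congr (hf : HasStepExpansion T m n f a) (hfg : ∀ p ∈ stepTriangle T, f p = g p) :
    HasStepExpansion T m n g a where
  contDiffOn := hf.contDiffOn
  isBigO_remainder := hf.isBigO_remainder.congr'
    ((eventually_mem_stepTriangle T).mono fun p hp => by simp only [hfg p hp]) .rfl

theorem add (hf : HasStepExpansion T m n f a) (hg : HasStepExpansion T m n g b) :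
    HasStepExpansion T m n (fun p => f p + g p) (fun j s => a j s + b j s) where
  contDiffOn j hj := (hf.contDiffOn j hj).add (hg.contDiffOn j hj)
  isBigO_remainder := (hf.isBigO_remainder.add hg.isBigO_remainder).congr_left fun p => by
    simp only [smul_add, sum_add_distrib]
    abel

theorem const_smul (hf : HasStepExpansion T m n f a) (r : ℝ) :
    HasStepExpansion T m n (fun p => r • f p) (fun j s => r • a j s) where
  contDiffOn j hj := (hf.contDiffOn j hj).const_smul r
  isBigO_remainder := (hf.isBigO_remainder.const_smul_left r).congr_left fun p => by
    simp only [Pi.smul_apply, smul_sub, smul_comm r, smul_sum]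

theorem pow_smul (hf : HasStepExpansion T m n f a) (k : ℕ) :
    HasStepExpansion T (m + k) n (fun p => p.2 ^ k • f p) a where
  contDiffOn := hf.contDiffOn
  isBigO_remainder := (isBigO_pow_smul hf.isBigO_remainder k).congr
    (fun p => by simp only [smul_sub, smul_smul, pow_add, mul_comm]) fun p => by ring

theorem step_smul (hf : HasStepExpansion T m n f a) :
    HasStepExpansion T (m + 1) n (fun p => p.2 • f p) a := by
  simpa only [pow_one] using hf.pow_smul 1

theorem of_isBigO (hf : f =O[stepFilter T] fun p => p.2 ^ (m + n)) :
    HasStepExpansion T m n f (fun _ _ => 0) where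
  contDiffOn _ _ := contDiffOn_const
  isBigO_remainder := by simpa using hf

theorem isBigO_coeff (hf : HasStepExpansion T m n f a) {j : ℕ} (hj : j < n) :
    (fun p : ℝ × ℝ => a j p.1) =O[stepFilter T] fun _ => (1 : ℝ) :=
  isBigO_one_comp_of_isCompact isCompact_Icc (hf.contDiffOn j hj).continuousOn
    ((eventually_mem_stepTriangle T).mono fun _ => fst_mem_Icc_of_mem_stepTriangle)

theorem isBigO_sum (hf : HasStepExpansion T m n f a) :
    (fun p : ℝ × ℝ => ∑ j ∈ range n, p.2 ^ j • a j p.1) =O[stepFilter T] fun _ => (1 : ℝ) :=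
  IsBigO.fun_sum fun j hj => by
    simpa using (isBigO_pow_of_le_of_tendsto_zero (tendsto_snd_stepFilter T) j.zero_le).smul
      (hf.isBigO_coeff (Finset.mem_range.1 hj))

theorem isBigO (hf : HasStepExpansion T m n f a) : f =O[stepFilter T] fun p => p.2 ^ m :=
  ((hf.isBigO_remainder.trans (isBigO_pow_of_le_of_tendsto_zero (tendsto_snd_stepFilter T)
    (m.le_add_right n))).add (isBigO_pow_smul_of_isBigO_one hf.isBigO_sum m)).congr_left
      fun _ => sub_add_cancel _ _

theorem truncate (hf : HasStepExpansion T m (n + 1) f a) : HasStepExpansion T m n f a where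
  contDiffOn j hj := (hf.contDiffOn j (by lia)).of_le (by norm_cast; lia)
  isBigO_remainder := by
    refine ((hf.isBigO_remainder.trans (isBigO_pow_of_le_of_tendsto_zero
      (tendsto_snd_stepFilter T) (by lia : m + n ≤ m + (n + 1)))).add
      (isBigO_pow_smul_of_isBigO_one (hf.isBigO_coeff n.lt_succ_self) (m + n))).congr_left
      fun p => ?_
    rw [sum_range_succ, smul_add, smul_smul, ← pow_add]
    abel

theorem lower (hf : HasStepExpansion T (m + 1) n f a) :
    HasStepExpansion T m (n + 1) f (fun | 0 => 0 | j + 1 => a j) where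
  contDiffOn
    | 0, _ => contDiffOn_const
    | j + 1, hj => by simpa using hf.contDiffOn j (by lia)
  isBigO_remainder := hf.isBigO_remainder.congr (fun p => by
    simp only [sum_range_succ', Pi.zero_apply, smul_zero, add_zero, pow_succ, mul_smul,
      smul_comm _ p.2, ← smul_sum]) fun p => by ring

theorem raise (hf : HasStepExpansion T m (n + 1) f a) (ha : ∀ s, a 0 s = 0) :
    HasStepExpansion T (m + 1) n f (fun j => a (j + 1)) where
  contDiffOn j hj := by simpa using hf.contDiffOn (j + 1) (by lia)
  isBigO_remainder := hf.isBigO_remainder.congr (fun p => by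
    simp only [sum_range_succ', ha, smul_zero, add_zero, pow_succ, mul_smul, smul_comm _ p.2,
      ← smul_sum]) fun p => by ring

theorem apply {f : ℝ × ℝ → G →L[ℝ] E} {a : ℕ → ℝ → G →L[ℝ] E} {g : ℝ × ℝ → G} {b : ℕ → ℝ → G}
    (hf : HasStepExpansion T m n f a) (hg : HasStepExpansion T k n g b) :
    HasStepExpansion T (m + k) n (fun p => f p (g p))
      (fun j s => ∑ i ∈ range (j + 1), a i s (b (j - i) s)) where
  contDiffOn j hj := ContDiffOn.sum fun i hi => by
    rw [Finset.mem_range] at hi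
    exact ((hf.contDiffOn i (by lia)).of_le (by norm_cast; lia)).clm_apply
      ((hg.contDiffOn (j - i) (by lia)).of_le (by norm_cast; lia))
  isBigO_remainder := by
    have high_order_terms : (fun p : ℝ × ℝ => ∑ i ∈ range n, ∑ j ∈ Finset.Ico (n - i) n,
        p.2 ^ (i + j) • a i p.1 (b j p.1)) =O[stepFilter T] fun p => p.2 ^ n := by
      refine IsBigO.fun_sum fun i hi => IsBigO.fun_sum fun j hj => ?_
      rw [Finset.mem_range] at hi
      rw [Finset.mem_Ico] at hj
      refine (isBigO_pow_smul_of_isBigO_one ?_ (i + j)).trans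
        (isBigO_pow_of_le_of_tendsto_zero (tendsto_snd_stepFilter T) (by lia))
      simpa using isBigO_clm_apply (hf.isBigO_coeff hi) (hg.isBigO_coeff hj.2)
    refine (((isBigO_clm_apply hf.isBigO_remainder hg.isBigO).congr_right fun p => ?_).add
      (isBigO_pow_smul ((isBigO_clm_apply hf.isBigO_sum hg.isBigO_remainder).congr_right
        fun p => one_mul _) m |>.congr_right fun p => ?_)
      |>.add (isBigO_pow_smul high_order_terms (m + k))).congr_left fun p => ?_
    · ring
    · ring
    · rw [map_sub, map_smul, clm_apply_truncated_product]
      simp only [_root_.sub_apply, _root_.smul_apply, pow_add]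
      module

end HasStepExpansion

theorem hasStepExpansion_taylor (hT : 0 < T) {m n : ℕ} {v : ℝ → E}
    (hv : ContDiffOn ℝ (m + n : ℕ) v (Icc 0 T)) {α : ℝ} (hα : α ∈ Icc (0 : ℝ) 1) :
    HasStepExpansion T m n
      (fun p => v (p.1 + α * p.2)
        - taylorSum m (fun j => iteratedDerivWithin j v (Icc 0 T) p.1) (α * p.2))
      (fun j s => (α ^ (m + j) / ((m + j).factorial : ℝ)) •
        iteratedDerivWithin (m + j) v (Icc 0 T) s) where
  contDiffOn j hj := (contDiffOn_iteratedDerivWithin (uniqueDiffOn_Icc hT)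
    (hv.of_le (by norm_cast; lia))).const_smul _
  isBigO_remainder := by
    have taylor := isBigO_sub_taylorSum hT hv (l := stepFilter T) (h := Prod.snd)
      ((eventually_mem_stepTriangle T).mono fun p hp => add_mul_mem_Icc_of_mem_stepTriangle hp hα)
      ((eventually_mem_stepTriangle T).mono fun p => fst_mem_Icc_of_mem_stepTriangle)
      (by simpa using isBigO_const_mul_self α Prod.snd _)
    refine taylor.congr_left fun p => ?_
    simp only [add_sub_cancel_left, taylorSum, sum_range_add, smul_sum, smul_smul, mul_pow,
      pow_add, sub_sub]
    congr 2
    exact sum_congr rfl fun j _ => by congr 1; ring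

theorem HasStepExpansion.exists_comp_substep (hT : 0 < T) {m : ℕ} {f : ℝ × ℝ → E} {a : ℕ → ℝ → E}
    (hf : HasStepExpansion T m 2 f a) {α β : ℝ} (hα : 0 ≤ α) (hβ : 0 ≤ β) (hαβ : α + β ≤ 1) :
    ∃ b, HasStepExpansion T m 2 (fun p => f (p.1 + α * p.2, β * p.2)) b ∧
      ∀ s, b 0 s = β ^ m • a 0 s ∧
        b 1 s = β ^ m • (β • a 1 s + α • derivWithin (a 0) (Icc 0 T) s) := by
  have remainder : (fun p : ℝ × ℝ => f (p.1 + α * p.2, β * p.2) - (β * p.2) ^ m •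
      (a 0 (p.1 + α * p.2) + (β * p.2) • a 1 (p.1 + α * p.2))) =O[stepFilter T]
      fun p => p.2 ^ (m + 2) := by
    refine ((hf.isBigO_remainder.comp_tendsto (tendsto_substep_stepFilter T hα hβ hαβ)).trans
      ((isBigO_const_mul_self β Prod.snd _).pow (m + 2))).congr_left fun p => ?_
    simp [sum_range_succ]
  have hα_mem : α ∈ Icc (0 : ℝ) 1 := ⟨hα, by linarith⟩
  have order_zero := (hasStepExpansion_taylor (m := 0) (n := 2) hT (hf.contDiffOn 0 two_pos)
    hα_mem).const_smul (β ^ m)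
  have order_one := (hasStepExpansion_taylor (m := 0) (n := 1) hT (hf.contDiffOn 1 one_lt_two)
    hα_mem).const_smul (β ^ (m + 1)) |>.step_smul
  have expansion := ((order_zero.add order_one.lower).pow_smul m).add
    (.of_isBigO (by simpa only [zero_add] using remainder))
  rw [zero_add] at expansion
  refine ⟨_, expansion.congr fun p _ => ?_, fun s => ⟨?_, ?_⟩⟩
  · simp only [taylorSum, Finset.range_zero, sum_empty, sub_zero, mul_pow]
    module
  · simp
  · simp only [iteratedDerivWithin_zero, iteratedDerivWithin_one, zero_add, Nat.factorial]
    push_cast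
    module

end StepExpansion

section RungeKuttaStages

open Set Filter Asymptotics Topology

variable {E : Type*} [NormedAddCommGroup E] [NormedSpace ℝ E]

/-- `u` is a `C⁷` solution of `u' = F(t, u)` on `[0, T]` along which `F` has the second-order
expansion `F(t, u(t) + δ) = F(t, u(t)) + A(t) δ + B(t)(δ, δ) / 2 + O(‖δ‖³)`, uniformly in `t`, with
`C⁴` coefficients. -/
structure IsExpandedSolution (T : ℝ) (F : ℝ → E → E) (u : ℝ → E) (A : ℝ → E →L[ℝ] E)
    (B : ℝ → E →L[ℝ] E →L[ℝ] E) : Prop where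
  horizon_pos : 0 < T
  contDiffOn_solution : ContDiffOn ℝ 7 u (Icc 0 T)
  contDiffOn_linear : ContDiffOn ℝ 4 A (Icc 0 T)
  contDiffOn_quadratic : ContDiffOn ℝ 4 B (Icc 0 T)
  ode : ∀ s ∈ Icc 0 T, F s (u s) = derivWithin u (Icc 0 T) s
  expansion : (fun q : ℝ × E => F q.1 (u q.1 + q.2)
    - (F q.1 (u q.1) + A q.1 q.2 + (1 / 2 : ℝ) • B q.1 q.2 q.2))
    =O[𝓟 (Icc 0 T) ×ˢ 𝓝 0] fun q => ‖q.2‖ ^ 3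

/-- The second stage value of RK4, approximating `u(t + h/2)`. -/
noncomputable def rk4Stage2 (F : ℝ → E → E) (t h : ℝ) (x : E) : E :=
  x + (1 / 2 * h) • F t x

/-- The third stage value of RK4, approximating `u(t + h/2)`. -/
noncomputable def rk4Stage3 (F : ℝ → E → E) (t h : ℝ) (x : E) : E :=
  x + (1 / 2 * h) • F (t + 1 / 2 * h) (rk4Stage2 F t h x)

/-- The fourth stage value of RK4, approximating `u(t + h)`. -/
noncomputable def rk4Stage4 (F : ℝ → E → E) (t h : ℝ) (x : E) : E :=
  x + (1 * h) • F (t + 1 / 2 * h) (rk4Stage3 F t h x)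

theorem rk4Step_eq_add_smul_stages (F : ℝ → E → E) (t h : ℝ) (x : E) :
    rk4Step F t h x = x + (1 / 6 * h) • (F t x + (2 : ℝ) • F (t + 1 / 2 * h) (rk4Stage2 F t h x)
      + (2 : ℝ) • F (t + 1 / 2 * h) (rk4Stage3 F t h x) + F (t + 1 * h) (rk4Stage4 F t h x)) := by
  simp only [rk4Step, rk4Stage2, rk4Stage3, rk4Stage4, one_div_mul_eq_div, one_mul]

theorem half_mem_unitInterval : (1 / 2 : ℝ) ∈ Icc (0 : ℝ) 1 := by
  norm_num

namespace IsExpandedSolution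

variable {T : ℝ} {F : ℝ → E → E} {u : ℝ → E} {A : ℝ → E →L[ℝ] E} {B : ℝ → E →L[ℝ] E →L[ℝ] E}

theorem isBigO_expansion (S : IsExpandedSolution T F u A B) {ι : Type*} {l : Filter ι}
    {h σ : ι → ℝ} {δ : ι → E} (hh : Tendsto h l (𝓝 0)) (hσ : ∀ᶠ i in l, σ i ∈ Icc 0 T)
    (hδ : δ =O[l] fun i => h i ^ 2) :
    (fun i => F (σ i) (u (σ i) + δ i) - (F (σ i) (u (σ i)) + A (σ i) (δ i)
      + (1 / 2 : ℝ) • B (σ i) (δ i) (δ i))) =O[l] fun i => h i ^ 6 := by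
  have hδ_zero : Tendsto δ l (𝓝 0) := hδ.trans_tendsto (by simpa using hh.pow 2)
  have cubic := S.expansion.comp_tendsto ((tendsto_principal.2 hσ).prodMk hδ_zero)
  exact cubic.trans ((hδ.norm_left.pow 3).congr_right fun i => by ring)

theorem contDiffOn_derivWithin (S : IsExpandedSolution T F u A B) :
    ContDiffOn ℝ 6 (derivWithin u (Icc 0 T)) (Icc 0 T) :=
  S.contDiffOn_solution.derivWithin (uniqueDiffOn_Icc S.horizon_pos) (by norm_num)

theorem exists_hasStepExpansion_slope (S : IsExpandedSolution T F u A B) {α : ℝ}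
    (hα : α ∈ Icc (0 : ℝ) 1) {δ : ℝ × ℝ → E} {a : ℕ → ℝ → E} (hδ : HasStepExpansion T 2 4 δ a) :
    ∃ b, HasStepExpansion T 2 4 (fun p => F (p.1 + α * p.2) (u (p.1 + α * p.2) + δ p)
        - derivWithin u (Icc 0 T) (p.1 + α * p.2)) b ∧
      ∀ s, b 0 s = A s (a 0 s) ∧
        b 1 s = A s (a 1 s) + α • derivWithin A (Icc 0 T) s (a 0 s) := by
  have mem_Icc {p : ℝ × ℝ} (hp : p ∈ stepTriangle T) := add_mul_mem_Icc_of_mem_stepTriangle hp hα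
  have linear := (hasStepExpansion_taylor (m := 0) S.horizon_pos S.contDiffOn_linear hα).apply hδ
  have quadratic := (((hasStepExpansion_taylor (m := 0) S.horizon_pos S.contDiffOn_quadratic hα
    ).apply hδ).apply hδ).const_smul (1 / 2)
  have cubic : HasStepExpansion T 2 4 _ _ := .of_isBigO (S.isBigO_expansion
    (tendsto_snd_stepFilter T) ((eventually_mem_stepTriangle T).mono fun _ => mem_Icc) hδ.isBigO)
  refine ⟨_, ((linear.add quadratic.lower.lower.truncate.truncate).add cubic).congr
    fun p hp => ?_, fun s => ⟨?_, ?_⟩⟩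
  · rw [← S.ode _ (mem_Icc hp)]
    simp only [taylorSum, Finset.range_zero, sum_empty, sub_zero]
    module
  · simp
  · simp [sum_range_succ, iteratedDerivWithin_one]

theorem exists_hasStepExpansion_stage (S : IsExpandedSolution T F u A B) {α β : ℝ}
    (hα : α ∈ Icc (0 : ℝ) 1) (hβ : β ∈ Icc (0 : ℝ) 1) {δ : ℝ × ℝ → E} {a : ℕ → ℝ → E}
    (hδ : HasStepExpansion T 2 4 δ a) :
    ∃ b, HasStepExpansion T 2 4 (fun p => u p.1 + (β * p.2) •
        F (p.1 + α * p.2) (u (p.1 + α * p.2) + δ p) - u (p.1 + β * p.2)) b ∧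
      ∀ s, b 0 s = (α * β - β ^ 2 / 2) • iteratedDerivWithin 2 u (Icc 0 T) s ∧
        b 1 s = (α ^ 2 * β / 2 - β ^ 3 / 6) • iteratedDerivWithin 3 u (Icc 0 T) s
          + β • A s (a 0 s) := by
  obtain ⟨κ, hκ, κ_coeff⟩ := S.exists_hasStepExpansion_slope hα hδ
  have solution := hasStepExpansion_taylor (m := 2) (n := 4) S.horizon_pos
    (S.contDiffOn_solution.of_le (by norm_num)) hβ
  have derivative := (hasStepExpansion_taylor (m := 1) (n := 4) S.horizon_pos
    (S.contDiffOn_derivWithin.of_le (by norm_num)) hα).step_smul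
  refine ⟨_, ((solution.const_smul (-1)).add
    ((derivative.add hκ.step_smul.lower.truncate).const_smul β)).congr
    fun p _ => ?_, fun s => ⟨?_, ?_⟩⟩
  · simp only [taylorSum, sum_range_succ, Finset.range_zero, sum_empty, ← iteratedDerivWithin_succ',
      iteratedDerivWithin_zero, iteratedDerivWithin_one, zero_add, Nat.factorial]
    push_cast
    module
  · simp only [← iteratedDerivWithin_succ', Nat.factorial, Pi.zero_apply]
    push_cast
    module
  · simp only [← iteratedDerivWithin_succ', Nat.factorial, κ_coeff]
    push_cast
    module

theorem exists_hasStepExpansion_rk4Stage2 (S : IsExpandedSolution T F u A B) :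
    ∃ a, HasStepExpansion T 2 4
        (fun p => rk4Stage2 F p.1 p.2 (u p.1) - u (p.1 + 1 / 2 * p.2)) a ∧
      ∀ s, a 0 s = (-1 / 8 : ℝ) • iteratedDerivWithin 2 u (Icc 0 T) s ∧
        a 1 s = (-1 / 48 : ℝ) • iteratedDerivWithin 3 u (Icc 0 T) s := by
  have no_error : HasStepExpansion T 2 4 (fun _ => (0 : E)) (fun _ _ => 0) :=
    .of_isBigO (isBigO_zero _ _)
  obtain ⟨a, ha, coeff⟩ := S.exists_hasStepExpansion_stage unitInterval.zero_mem
    half_mem_unitInterval no_error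
  refine ⟨a, ha.congr fun p _ => by simp [rk4Stage2], fun s => ⟨?_, ?_⟩⟩
  · rw [(coeff s).1]
    norm_num
  · rw [(coeff s).2]
    norm_num

theorem exists_hasStepExpansion_rk4Stage3 (S : IsExpandedSolution T F u A B) :
    ∃ a, HasStepExpansion T 2 4
        (fun p => rk4Stage3 F p.1 p.2 (u p.1) - u (p.1 + 1 / 2 * p.2)) a ∧
      ∀ s, a 0 s = (1 / 8 : ℝ) • iteratedDerivWithin 2 u (Icc 0 T) s ∧
        a 1 s = (1 / 24 : ℝ) • iteratedDerivWithin 3 u (Icc 0 T) s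
          - (1 / 16 : ℝ) • A s (iteratedDerivWithin 2 u (Icc 0 T) s) := by
  obtain ⟨a, ha, stage2_coeff⟩ := S.exists_hasStepExpansion_rk4Stage2
  obtain ⟨b, hb, coeff⟩ := S.exists_hasStepExpansion_stage half_mem_unitInterval
    half_mem_unitInterval ha
  refine ⟨b, hb.congr fun p _ => by simp only [rk4Stage3, add_sub_cancel], fun s => ⟨?_, ?_⟩⟩
  · rw [(coeff s).1]
    module
  · rw [(coeff s).2, (stage2_coeff s).1, map_smul]
    module

theorem exists_hasStepExpansion_rk4Stage4 (S : IsExpandedSolution T F u A B) :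
    ∃ a, HasStepExpansion T 2 4
        (fun p => rk4Stage4 F p.1 p.2 (u p.1) - u (p.1 + 1 * p.2)) a ∧
      ∀ s, a 0 s = 0 ∧ a 1 s = (-1 / 24 : ℝ) • iteratedDerivWithin 3 u (Icc 0 T) s
        + (1 / 8 : ℝ) • A s (iteratedDerivWithin 2 u (Icc 0 T) s) := by
  obtain ⟨a, ha, stage3_coeff⟩ := S.exists_hasStepExpansion_rk4Stage3
  obtain ⟨b, hb, coeff⟩ := S.exists_hasStepExpansion_stage half_mem_unitInterval
    unitInterval.one_mem ha
  refine ⟨b, hb.congr fun p _ => by simp only [rk4Stage4, add_sub_cancel], fun s => ⟨?_, ?_⟩⟩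
  · rw [(coeff s).1]
    module
  · rw [(coeff s).2, (stage3_coeff s).1, map_smul]
    module

theorem exists_hasStepExpansion_rk4Step (S : IsExpandedSolution T F u A B) :
    ∃ a, HasStepExpansion T 5 2 (fun p => rk4Step F p.1 p.2 (u p.1) - u (p.1 + p.2)) a := by
  obtain ⟨a₂, h₂, coeff₂⟩ := S.exists_hasStepExpansion_rk4Stage2
  obtain ⟨a₃, h₃, coeff₃⟩ := S.exists_hasStepExpansion_rk4Stage3
  obtain ⟨a₄, h₄, coeff₄⟩ := S.exists_hasStepExpansion_rk4Stage4
  obtain ⟨κ₂, hκ₂, slope₂⟩ := S.exists_hasStepExpansion_slope half_mem_unitInterval h₂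
  obtain ⟨κ₃, hκ₃, slope₃⟩ := S.exists_hasStepExpansion_slope half_mem_unitInterval h₃
  obtain ⟨κ₄, hκ₄, slope₄⟩ := S.exists_hasStepExpansion_slope unitInterval.one_mem h₄
  have solution := hasStepExpansion_taylor (m := 3) (n := 4) S.horizon_pos
    S.contDiffOn_solution unitInterval.one_mem
  have derivative {α : ℝ} (hα : α ∈ Icc (0 : ℝ) 1) := hasStepExpansion_taylor (m := 2) (n := 4)
    S.horizon_pos S.contDiffOn_derivWithin hα
  have slopes := ((((hκ₂.add hκ₃).const_smul 2).add hκ₄).add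
    (((derivative half_mem_unitInterval).const_smul 4).add
      (derivative unitInterval.one_mem))).step_smul.const_smul (1 / 6)
  refine ⟨_, (((solution.const_smul (-1)).add slopes).raise fun s => ?_).raise (fun s => ?_)
    |>.congr fun p hp => ?_⟩
  · simp only [← iteratedDerivWithin_succ', Nat.factorial, slope₂, slope₃, slope₄, coeff₂, coeff₃,
      coeff₄, map_smul, map_zero]
    push_cast
    module
  · simp only [← iteratedDerivWithin_succ', Nat.factorial, slope₂, slope₃, slope₄, coeff₂, coeff₃,
      coeff₄, map_smul, map_zero, map_add, map_sub]
    push_cast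
    module
  · simp only [rk4Step_eq_add_smul_stages, S.ode _ (fst_mem_Icc_of_mem_stepTriangle hp), taylorSum,
      sum_range_succ, Finset.range_zero, sum_empty, ← iteratedDerivWithin_succ',
      iteratedDerivWithin_zero, iteratedDerivWithin_one, zero_add, Nat.factorial, add_sub_cancel,
      one_mul]
    push_cast
    module

end IsExpandedSolution

end RungeKuttaStages

section RungeKuttaError

open Set Filter Asymptotics Topology

variable {E : Type*} [NormedAddCommGroup E] [NormedSpace ℝ E] {T : ℝ}

namespace IsExpandedSolution

variable {F : ℝ → E → E} {u : ℝ → E} {A : ℝ → E →L[ℝ] E} {B : ℝ → E →L[ℝ] E →L[ℝ] E}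

section Perturbation

variable {ι : Type*} {l : Filter ι} {h t : ι → ℝ} {e : ι → E}

theorem isBigO_slope_perturbation (S : IsExpandedSolution T F u A B) {σ : ι → ℝ} {y z : ι → E}
    (hh : Tendsto h l (𝓝 0)) (hσ : ∀ᶠ i in l, σ i ∈ Icc 0 T) (ht : ∀ᶠ i in l, t i ∈ Icc 0 T)
    (hσt : (fun i => σ i - t i) =O[l] h) (hy : (fun i => y i - u (σ i)) =O[l] fun i => h i ^ 2)
    (he : e =O[l] fun i => h i ^ 5) (hyz : (fun i => z i - y i - e i) =O[l] fun i => h i ^ 6) :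
    (fun i => F (σ i) (z i) - F (σ i) (y i) - A (t i) (e i)) =O[l] fun i => h i ^ 6 := by
  have weaken {m n : ℕ} (hmn : n ≤ m) := isBigO_pow_of_le_of_tendsto_zero hh hmn
  have hzy : (fun i => z i - y i) =O[l] fun i => h i ^ 5 :=
    ((hyz.trans (weaken (by norm_num))).add he).congr_left fun i => by abel
  have hz : (fun i => z i - u (σ i)) =O[l] fun i => h i ^ 2 :=
    ((hzy.trans (weaken (by norm_num))).add hy).congr_left fun i => by abel
  have hA : (fun i => A (σ i)) =O[l] fun _ => (1 : ℝ) :=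
    isBigO_one_comp_of_isCompact isCompact_Icc S.contDiffOn_linear.continuousOn hσ
  have hB : (fun i => B (σ i)) =O[l] fun _ => (1 : ℝ) :=
    isBigO_one_comp_of_isCompact isCompact_Icc S.contDiffOn_quadratic.continuousOn hσ
  have hA_sub : (fun i => A (σ i) - A (t i)) =O[l] h := by
    simpa [taylorSum] using isBigO_sub_taylorSum (n := 1) S.horizon_pos
      (S.contDiffOn_linear.of_le (by norm_num)) hσ ht hσt
  have linear := ((isBigO_clm_apply hA_sub he).congr_right fun i => (pow_succ' (h i) 5).symm).add
    ((isBigO_clm_apply hA hyz).congr_right fun i => one_mul _)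
  have quadratic := (((isBigO_clm_apply (isBigO_clm_apply hB hz) hzy).congr_right
    fun i => show _ = h i ^ 7 by ring).add
      ((isBigO_clm_apply (isBigO_clm_apply hB hzy) hy).congr_right
        fun i => by ring)).const_smul_left (1 / 2 : ℝ) |>.trans (weaken (by norm_num : 6 ≤ 7))
  refine (((S.isBigO_expansion hh hσ hz).sub (S.isBigO_expansion hh hσ hy)).add
    (linear.add quadratic)).congr_left fun i => ?_
  simp only [add_sub_cancel, map_sub, _root_.sub_apply, Pi.smul_apply]
  module

theorem isBigO_slope_perturbation_step (S : IsExpandedSolution T F u A B)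
    (hl : Tendsto (fun i => (t i, h i)) l (stepFilter T)) {α : ℝ} (hα : α ∈ Icc (0 : ℝ) 1)
    {y z : ι → E} (hy : (fun i => y i - u (t i + α * h i)) =O[l] fun i => h i ^ 2)
    (he : e =O[l] fun i => h i ^ 5) (hyz : (fun i => z i - y i - e i) =O[l] fun i => h i ^ 6) :
    (fun i => F (t i + α * h i) (z i) - F (t i + α * h i) (y i) - A (t i) (e i))
      =O[l] fun i => h i ^ 6 := by
  obtain ⟨mem_triangle, hh⟩ := tendsto_stepFilter_iff.1 hl
  exact S.isBigO_slope_perturbation hh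
    (mem_triangle.mono fun i hi => add_mul_mem_Icc_of_mem_stepTriangle hi hα)
    (mem_triangle.mono fun i hi => fst_mem_Icc_of_mem_stepTriangle hi)
    (by simpa using isBigO_const_mul_self α h l) hy he hyz

theorem isBigO_step_smul_of_isBigO_sub_linear (S : IsExpandedSolution T F u A B)
    (hl : Tendsto (fun i => (t i, h i)) l (stepFilter T)) (he : e =O[l] fun i => h i ^ 5)
    {d : ι → E} (hd : (fun i => d i - A (t i) (e i)) =O[l] fun i => h i ^ 6) (c : ℝ) :
    (fun i => (c * h i) • d i) =O[l] fun i => h i ^ 6 := by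
  obtain ⟨mem_triangle, hh⟩ := tendsto_stepFilter_iff.1 hl
  have hA : (fun i => A (t i)) =O[l] fun _ => (1 : ℝ) :=
    isBigO_one_comp_of_isCompact isCompact_Icc S.contDiffOn_linear.continuousOn
      (mem_triangle.mono fun i hi => fst_mem_Icc_of_mem_stepTriangle hi)
  refine isBigO_const_mul_smul c (((hd.trans (isBigO_pow_of_le_of_tendsto_zero hh
    (by norm_num : 5 ≤ 6))).add
      ((isBigO_clm_apply hA he).congr_right fun i => one_mul _)).congr_left
      fun i => sub_add_cancel _ _)

theorem isBigO_rk4Step_perturbation (S : IsExpandedSolution T F u A B)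
    (hl : Tendsto (fun i => (t i, h i)) l (stepFilter T)) (he : e =O[l] fun i => h i ^ 5) :
    (fun i => rk4Step F (t i) (h i) (u (t i) + e i) - rk4Step F (t i) (h i) (u (t i)) - e i
      - h i • A (t i) (e i)) =O[l] fun i => h i ^ 7 := by
  obtain ⟨_, error₂, _⟩ := S.exists_hasStepExpansion_rk4Stage2
  obtain ⟨_, error₃, _⟩ := S.exists_hasStepExpansion_rk4Stage3
  obtain ⟨_, error₄, _⟩ := S.exists_hasStepExpansion_rk4Stage4
  have slope₁ := S.isBigO_slope_perturbation_step hl unitInterval.zero_mem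
    (y := fun i => u (t i)) (z := fun i => u (t i) + e i) (by simpa using isBigO_zero _ l) he
    (by simpa using isBigO_zero _ l)
  have slope₂ := S.isBigO_slope_perturbation_step hl half_mem_unitInterval
    (y := fun i => rk4Stage2 F (t i) (h i) (u (t i)))
    (z := fun i => rk4Stage2 F (t i) (h i) (u (t i) + e i)) (error₂.isBigO.comp_tendsto hl) he
    ((S.isBigO_step_smul_of_isBigO_sub_linear hl he slope₁ (1 / 2)).congr_left fun i => by
      simp only [rk4Stage2, zero_mul, add_zero]
      module)
  have slope₃ := S.isBigO_slope_perturbation_step hl half_mem_unitInterval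
    (y := fun i => rk4Stage3 F (t i) (h i) (u (t i)))
    (z := fun i => rk4Stage3 F (t i) (h i) (u (t i) + e i)) (error₃.isBigO.comp_tendsto hl) he
    ((S.isBigO_step_smul_of_isBigO_sub_linear hl he slope₂ (1 / 2)).congr_left fun i => by
      simp only [rk4Stage3]
      module)
  have slope₄ := S.isBigO_slope_perturbation_step hl unitInterval.one_mem
    (y := fun i => rk4Stage4 F (t i) (h i) (u (t i)))
    (z := fun i => rk4Stage4 F (t i) (h i) (u (t i) + e i)) (error₄.isBigO.comp_tendsto hl) he
    ((S.isBigO_step_smul_of_isBigO_sub_linear hl he slope₃ 1).congr_left fun i => by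
      simp only [rk4Stage4]
      module)
  refine (isBigO_const_mul_smul (1 / 6) (((slope₁.add (slope₂.const_smul_left (2 : ℝ))).add
    (slope₃.const_smul_left (2 : ℝ))).add slope₄)).congr_left fun i => ?_
  simp only [rk4Step_eq_add_smul_stages, Pi.smul_apply, zero_mul, add_zero]
  module

end Perturbation

theorem exists_hasStepExpansion_rk4Step_substep (S : IsExpandedSolution T F u A B)
    {d : ℕ → ℝ → E}
    (hd : HasStepExpansion T 5 2 (fun p => rk4Step F p.1 p.2 (u p.1) - u (p.1 + p.2)) d) {α β : ℝ}
    (hα : 0 ≤ α) (hβ : 0 < β) (hαβ : α + β ≤ 1) {y : ℝ × ℝ → E} {a : ℕ → ℝ → E}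
    (hy : HasStepExpansion T 5 2 (fun p => y p - u (p.1 + α * p.2)) a) :
    ∃ b, HasStepExpansion T 5 2
        (fun p => rk4Step F (p.1 + α * p.2) (β * p.2) (y p) - u (p.1 + α * p.2 + β * p.2)) b ∧
      ∀ s, b 0 s = a 0 s + β ^ 5 • d 0 s ∧ b 1 s = a 1 s + β • A s (a 0 s)
        + β ^ 5 • (β • d 1 s + α • derivWithin (d 0) (Icc 0 T) s) := by
  obtain ⟨d', hd', coeff⟩ := hd.exists_comp_substep S.horizon_pos hα hβ.le hαβ
  have linear := ((hasStepExpansion_taylor (m := 0) (n := 2) S.horizon_pos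
    (S.contDiffOn_linear.of_le (by norm_num)) (⟨hα, by linarith⟩ : α ∈ Icc (0 : ℝ) 1)).apply
      hy).step_smul.const_smul β
  have perturbation := S.isBigO_rk4Step_perturbation
    (tendsto_substep_stepFilter T hα hβ.le hαβ) (hy.isBigO.trans
      ((isBigO_self_const_mul hβ.ne' Prod.snd _).pow 5)) |>.trans
        ((isBigO_const_mul_self β Prod.snd _).pow 7)
  refine ⟨_, (((hy.add linear.lower.truncate).add hd').add (.of_isBigO perturbation)).congr
    fun p _ => ?_, fun s => ⟨?_, ?_⟩⟩
  · simp only [taylorSum, Finset.range_zero, sum_empty, sub_zero, add_sub_cancel]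
    module
  · simp [coeff]
  · simp [coeff]

theorem exists_hasStepExpansion_rk4Iter (S : IsExpandedSolution T F u A B) (N : ℕ) :
    ∃ φ χ ψ : ℝ → E, ∀ i ≤ N, ∃ a, HasStepExpansion T 5 2
        (fun p => rk4Iter F p.1 (p.2 / N) (u p.1) i - u (p.1 + i / N * p.2)) a ∧
      ∀ s, a 0 s = (i : ℝ) • φ s ∧ a 1 s = (i.choose 2 : ℝ) • χ s + (i : ℝ) • ψ s := by
  obtain ⟨d, hd⟩ := S.exists_hasStepExpansion_rk4Step
  refine ⟨fun s => (1 / N : ℝ) ^ 5 • d 0 s,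
    fun s => (1 / N : ℝ) ^ 6 • (derivWithin (d 0) (Icc 0 T) s + A s (d 0 s)),
    fun s => (1 / N : ℝ) ^ 6 • d 1 s, fun i => ?_⟩
  induction i with
  | zero => exact fun _ => ⟨_, .of_isBigO (by simpa [rk4Iter] using isBigO_zero _ _), by simp⟩
  | succ i ih =>
    intro hi
    obtain ⟨a, ha, ha_coeff⟩ := ih (by lia)
    have hN : (0 : ℝ) < N := by exact_mod_cast (by lia : 0 < N)
    have substep_le : (i / N + 1 / N : ℝ) ≤ 1 := by
      rw [← add_div, div_le_one hN]
      exact_mod_cast hi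
    obtain ⟨b, hb, hb_coeff⟩ := S.exists_hasStepExpansion_rk4Step_substep hd (by positivity)
      (by positivity) substep_le ha
    refine ⟨b, hb.congr fun p _ => ?_, fun s => ⟨?_, ?_⟩⟩
    · rw [rk4Iter, ← mul_div_assoc, mul_div_right_comm, one_div_mul_eq_div,
        show p.1 + i / N * p.2 + p.2 / N = p.1 + (i + 1 : ℕ) / N * p.2 by push_cast; ring]
    · rw [(hb_coeff s).1, (ha_coeff s).1]
      push_cast
      module
    · rw [(hb_coeff s).2, (ha_coeff s).1, (ha_coeff s).2, Nat.choose_succ_succ',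
        Nat.choose_one_right, map_smul, map_smul]
      push_cast
      module

end IsExpandedSolution

end RungeKuttaError

section DeferredCorrection

open Set Filter Asymptotics Topology

variable {E : Type*} [NormedAddCommGroup E] [NormedSpace ℝ E]

theorem dcA_taylorSum_add_quadratic (c : ℕ → E) (k : ℝ) (x y : E) :
    dcA (fun i => taylorSum 7 c (i / 5 * k) + (i : ℝ) • x + (i.choose 2 : ℝ) • y) =
      taylorSum 7 c k - c 0 - k • taylorSum 6 (fun j => c (j + 1)) (1 / 2 * k) := by
  simp only [dcA, taylorSum, sum_range_succ, Finset.range_zero, sum_empty, Nat.factorial,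
    Nat.choose]
  push_cast
  module

theorem dcB_taylorSum_add_linear (c : ℕ → E) (k : ℝ) (x : E) :
    dcB (fun i => taylorSum 6 c (i / 5 * k) + (i : ℝ) • x) =
      taylorSum 6 c (1 / 2 * k) - (c 0 + (k / 2) • c 1) := by
  simp only [dcB, taylorSum, sum_range_succ, Finset.range_zero, sum_empty, Nat.factorial]
  push_cast
  module

theorem dcA_sub (v w : ℕ → E) : dcA (fun i => v i - w i) = dcA v - dcA w := by
  simp only [dcA]
  module

theorem dcB_sub (v w : ℕ → E) : dcB (fun i => v i - w i) = dcB v - dcB w := by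
  simp only [dcB]
  module

theorem isBigO_dcA {ι : Type*} {l : Filter ι} {w : ι → ℕ → E} {g : ι → ℝ}
    (hw : ∀ i ≤ 5, (fun p => w p i) =O[l] g) : (fun p => dcA (w p)) =O[l] g :=
  (((((((hw 0 (by lia)).const_smul_left (-3 : ℝ)).sub (hw 1 (by lia))).add
    ((hw 2 (by lia)).const_smul_left (18 : ℝ))).sub ((hw 3 (by lia)).const_smul_left (18 : ℝ))).add
    (hw 4 (by lia))).add ((hw 5 le_rfl).const_smul_left (3 : ℝ))).const_smul_left (125 / 384 : ℝ)

theorem isBigO_dcB {ι : Type*} {l : Filter ι} {w : ι → ℕ → E} {g : ι → ℝ}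
    (hw : ∀ i ≤ 5, (fun p => w p i) =O[l] g) : (fun p => dcB (w p)) =O[l] g :=
  (((((((hw 0 (by lia)).const_smul_left (145 : ℝ)).sub
    ((hw 1 (by lia)).const_smul_left (387 : ℝ))).add
    ((hw 2 (by lia)).const_smul_left (402 : ℝ))).sub
    ((hw 3 (by lia)).const_smul_left (238 : ℝ))).add
    ((hw 4 (by lia)).const_smul_left (93 : ℝ))).sub
    ((hw 5 le_rfl).const_smul_left (15 : ℝ))).const_smul_left (25 / 768 : ℝ)

namespace IsExpandedSolution

variable {T : ℝ} {F : ℝ → E → E} {u : ℝ → E} {A : ℝ → E →L[ℝ] E} {B : ℝ → E →L[ℝ] E →L[ℝ] E}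

theorem isBigO_sub_taylorSum (S : IsExpandedSolution T F u A B) {n : ℕ} (hn : n ≤ 7) {α : ℝ}
    (hα : α ∈ Icc (0 : ℝ) 1) :
    (fun p : ℝ × ℝ => u (p.1 + α * p.2)
      - taylorSum n (fun j => iteratedDerivWithin j u (Icc 0 T) p.1) (α * p.2))
      =O[stepFilter T] fun p => p.2 ^ n :=
  (hasStepExpansion_taylor (n := 0) S.horizon_pos
    (S.contDiffOn_solution.of_le (by exact_mod_cast hn)) hα).isBigO

theorem isBigO_derivWithin_sub_taylorSum (S : IsExpandedSolution T F u A B) {α : ℝ}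
    (hα : α ∈ Icc (0 : ℝ) 1) :
    (fun p : ℝ × ℝ => derivWithin u (Icc 0 T) (p.1 + α * p.2)
      - taylorSum 6 (fun j => iteratedDerivWithin (j + 1) u (Icc 0 T) p.1) (α * p.2))
      =O[stepFilter T] fun p => p.2 ^ 6 := by
  simpa only [← iteratedDerivWithin_succ'] using (hasStepExpansion_taylor (m := 6) (n := 0)
    S.horizon_pos S.contDiffOn_derivWithin hα).isBigO

theorem exists_isBigO_rk4Iter_sub_quadratic (S : IsExpandedSolution T F u A B) (N : ℕ) :
    ∃ x y : ℝ × ℝ → E, ∀ i ≤ N, (fun p : ℝ × ℝ => rk4Iter F p.1 (p.2 / N) (u p.1) i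
      - (taylorSum 7 (fun j => iteratedDerivWithin j u (Icc 0 T) p.1) (i / N * p.2)
        + (i : ℝ) • x p + (i.choose 2 : ℝ) • y p)) =O[stepFilter T] fun p => p.2 ^ 7 := by
  obtain ⟨φ, χ, ψ, expansion⟩ := S.exists_hasStepExpansion_rk4Iter N
  refine ⟨fun p => p.2 ^ 5 • φ p.1 + p.2 ^ 6 • ψ p.1, fun p => p.2 ^ 6 • χ p.1, fun i hi => ?_⟩
  obtain ⟨a, ha, coeff⟩ := expansion i hi
  refine (ha.isBigO_remainder.add (S.isBigO_sub_taylorSum le_rfl (α := i / N)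
    ⟨by positivity, div_le_one_of_le₀ (by exact_mod_cast hi) N.cast_nonneg⟩)).congr_left fun p => ?_
  simp only [sum_range_succ, Finset.range_zero, sum_empty, coeff]
  module

theorem exists_isBigO_rk4Iter_sub_linear (S : IsExpandedSolution T F u A B) (N : ℕ) :
    ∃ x : ℝ × ℝ → E, ∀ i ≤ N, (fun p : ℝ × ℝ => rk4Iter F p.1 (p.2 / N) (u p.1) i
      - (taylorSum 6 (fun j => iteratedDerivWithin j u (Icc 0 T) p.1) (i / N * p.2)
        + (i : ℝ) • x p)) =O[stepFilter T] fun p => p.2 ^ 6 := by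
  obtain ⟨φ, χ, ψ, expansion⟩ := S.exists_hasStepExpansion_rk4Iter N
  refine ⟨fun p => p.2 ^ 5 • φ p.1, fun i hi => ?_⟩
  obtain ⟨a, ha, coeff⟩ := expansion i hi
  refine (ha.truncate.isBigO_remainder.add (S.isBigO_sub_taylorSum (by norm_num) (α := i / N)
    ⟨by positivity, div_le_one_of_le₀ (by exact_mod_cast hi) N.cast_nonneg⟩)).congr_left fun p => ?_
  simp only [sum_range_succ, Finset.range_zero, sum_empty, coeff]
  module

theorem isBigO_dcA_rk4Iter_sub (S : IsExpandedSolution T F u A B) :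
    (fun p : ℝ × ℝ => dcA (rk4Iter F p.1 (p.2 / 5) (u p.1)) - (u (p.1 + p.2) - u p.1
      - p.2 • derivWithin u (Icc 0 T) (p.1 + 1 / 2 * p.2))) =O[stepFilter T] fun p => p.2 ^ 7 := by
  obtain ⟨x, y, iter⟩ := S.exists_isBigO_rk4Iter_sub_quadratic 5
  have derivative := isBigO_const_mul_smul 1
    (S.isBigO_derivWithin_sub_taylorSum half_mem_unitInterval)
  refine (((isBigO_dcA iter).sub (S.isBigO_sub_taylorSum le_rfl unitInterval.one_mem)).add
    derivative).congr_left fun p => ?_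
  rw [dcA_sub, Nat.cast_ofNat, dcA_taylorSum_add_quadratic, one_mul]
  simp only [iteratedDerivWithin_zero]
  module

theorem isBigO_dcB_rk4Iter_sub (S : IsExpandedSolution T F u A B) :
    (fun p : ℝ × ℝ => u p.1 + (p.2 / 2) • F p.1 (u p.1) + dcB (rk4Iter F p.1 (p.2 / 5) (u p.1))
      - u (p.1 + 1 / 2 * p.2)) =O[stepFilter T] fun p => p.2 ^ 6 := by
  obtain ⟨x, iter⟩ := S.exists_isBigO_rk4Iter_sub_linear 5
  refine ((isBigO_dcB iter).sub (S.isBigO_sub_taylorSum (by norm_num) half_mem_unitInterval)).congr'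
    ?_ .rfl
  filter_upwards [eventually_mem_stepTriangle T] with p hp
  rw [dcB_sub, Nat.cast_ofNat, dcB_taylorSum_add_linear,
    S.ode _ (fst_mem_Icc_of_mem_stepTriangle hp), iteratedDerivWithin_zero, iteratedDerivWithin_one]
  module

theorem isBigO_dcStep_sub (S : IsExpandedSolution T F u A B) {K : NNReal}
    (hF : ∀ t ∈ Icc 0 T, LipschitzWith K (F t)) :
    (fun p : ℝ × ℝ => dcStep F p.1 p.2 (u p.1) - u (p.1 + p.2))
      =O[stepFilter T] fun p => p.2 ^ 7 := by
  have midpoint_slope : (fun p : ℝ × ℝ => F (p.1 + 1 / 2 * p.2) (u p.1 + (p.2 / 2) • F p.1 (u p.1)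
      + dcB (rk4Iter F p.1 (p.2 / 5) (u p.1))) - derivWithin u (Icc 0 T) (p.1 + 1 / 2 * p.2))
      =O[stepFilter T] fun p => p.2 ^ 6 := by
    refine .trans (.of_bound K ?_) S.isBigO_dcB_rk4Iter_sub
    filter_upwards [eventually_mem_stepTriangle T] with p hp
    have midpoint_mem := add_mul_mem_Icc_of_mem_stepTriangle hp half_mem_unitInterval
    rw [← S.ode _ midpoint_mem]
    exact (hF _ midpoint_mem).norm_sub_le _ _
  refine (S.isBigO_dcA_rk4Iter_sub.add (isBigO_const_mul_smul 1 midpoint_slope)).congr_left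
    fun p => ?_
  simp only [dcStep, one_div_mul_eq_div]
  module

end IsExpandedSolution

end DeferredCorrection

section Stability

open Set Filter Asymptotics Topology

variable {E : Type*} [NormedAddCommGroup E] {T : ℝ} {F : ℝ → E → E} {K : NNReal} {ι : Type*}
  {l : Filter ι} {t h : ι → ℝ} {x y : ι → E}

theorem isBigO_sub_of_isBigO_sub_sub (hl : ∀ᶠ i in l, (t i, h i) ∈ stepTriangle T) {v w : ι → E}
    (hvw : (fun i => v i - w i - (x i - y i)) =O[l] fun i => h i * ‖x i - y i‖) :
    (fun i => v i - w i) =O[l] fun i => x i - y i := by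
  have h_bounded : h =O[l] fun _ => (1 : ℝ) := by
    refine .of_bound T (hl.mono fun i hi => ?_)
    obtain ⟨time_nonneg, step_nonneg, end_le⟩ := hi
    rw [norm_one, mul_one, Real.norm_of_nonneg step_nonneg]
    exact (le_add_of_nonneg_left time_nonneg).trans end_le
  have increment := hvw.trans (h_bounded.mul (isBigO_refl (fun i => ‖x i - y i‖) l))
  simp only [one_mul] at increment
  exact (increment.of_norm_right.add (isBigO_refl _ l)).congr_left fun i => sub_add_cancel _ _

theorem isBigO_slope_sub (hF : ∀ s ∈ Icc 0 T, LipschitzWith K (F s))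
    (hl : ∀ᶠ i in l, (t i, h i) ∈ stepTriangle T) {α : ℝ} (hα : α ∈ Icc (0 : ℝ) 1) {v w : ι → E}
    (hvw : (fun i => v i - w i) =O[l] fun i => x i - y i) :
    (fun i => F (t i + α * h i) (v i) - F (t i + α * h i) (w i)) =O[l] fun i => x i - y i :=
  .trans (.of_bound K (hl.mono fun _ hi =>
    (hF _ (add_mul_mem_Icc_of_mem_stepTriangle hi hα)).norm_sub_le _ _)) hvw

variable [NormedSpace ℝ E]

theorem isBigO_add_step_smul_sub_sub (h : ι → ℝ) (c : ℝ) {v w : ι → E}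
    (hvw : (fun i => v i - w i) =O[l] fun i => x i - y i) :
    (fun i => x i + (c * h i) • v i - (y i + (c * h i) • w i) - (x i - y i))
      =O[l] fun i => h i * ‖x i - y i‖ :=
  ((isBigO_const_mul_self c h l).smul hvw.norm_right).congr_left fun i => by module

theorem isBigO_rk4Step_sub_sub (hF : ∀ s ∈ Icc 0 T, LipschitzWith K (F s))
    (hl : ∀ᶠ i in l, (t i, h i) ∈ stepTriangle T) (x y : ι → E) :
    (fun i => rk4Step F (t i) (h i) (x i) - rk4Step F (t i) (h i) (y i) - (x i - y i))
      =O[l] fun i => h i * ‖x i - y i‖ := by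
  have stage {α β : ℝ} {v w : ι → E} (hα : α ∈ Icc (0 : ℝ) 1)
      (hvw : (fun i => v i - w i) =O[l] fun i => x i - y i) :=
    isBigO_sub_of_isBigO_sub_sub hl
      (isBigO_add_step_smul_sub_sub h β (isBigO_slope_sub hF hl hα hvw))
  have slope₁ := isBigO_slope_sub hF hl unitInterval.zero_mem (isBigO_refl (fun i => x i - y i) l)
  have stage₂ : (fun i => rk4Stage2 F (t i) (h i) (x i) - rk4Stage2 F (t i) (h i) (y i))
      =O[l] fun i => x i - y i := by
    simpa [rk4Stage2] using stage unitInterval.zero_mem (isBigO_refl (fun i => x i - y i) l)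
  have stage₃ : (fun i => rk4Stage3 F (t i) (h i) (x i) - rk4Stage3 F (t i) (h i) (y i))
      =O[l] fun i => x i - y i := stage half_mem_unitInterval stage₂
  have stage₄ : (fun i => rk4Stage4 F (t i) (h i) (x i) - rk4Stage4 F (t i) (h i) (y i))
      =O[l] fun i => x i - y i := stage half_mem_unitInterval stage₃
  have slope₂ := isBigO_slope_sub hF hl half_mem_unitInterval stage₂
  have slope₃ := isBigO_slope_sub hF hl half_mem_unitInterval stage₃
  have slope₄ := isBigO_slope_sub hF hl unitInterval.one_mem stage₄
  simp only [zero_mul, add_zero] at slope₁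
  simp only [rk4Step_eq_add_smul_stages]
  refine isBigO_add_step_smul_sub_sub h (1 / 6) ((((slope₁.add
    (slope₂.const_smul_left (2 : ℝ))).add (slope₃.const_smul_left (2 : ℝ))).add
      slope₄).congr_left fun i => ?_)
  simp only [Pi.smul_apply]
  module

theorem isBigO_rk4Iter_sub_sub (hF : ∀ s ∈ Icc 0 T, LipschitzWith K (F s))
    (hl : ∀ᶠ i in l, (t i, h i) ∈ stepTriangle T) (x y : ι → E) {N j : ℕ} (hj : j ≤ N) :
    (fun i => rk4Iter F (t i) (h i / N) (x i) j - rk4Iter F (t i) (h i / N) (y i) j - (x i - y i))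
      =O[l] fun i => h i * ‖x i - y i‖ := by
  induction j with
  | zero => simpa [rk4Iter] using isBigO_zero _ _
  | succ j ih =>
    have iterate := ih (by lia)
    have substep_le : (j / N + 1 / N : ℝ) ≤ 1 := by
      rw [← add_div, div_le_one (by exact_mod_cast (by lia : 0 < N))]
      exact_mod_cast hj
    have step := isBigO_rk4Step_sub_sub hF
      (hl.mono fun i hi => substep_mem_stepTriangle hi (by positivity) (by positivity) substep_le)
      (fun i => rk4Iter F (t i) (h i / N) (x i) j) fun i => rk4Iter F (t i) (h i / N) (y i) j
    refine ((step.trans ((isBigO_const_mul_self _ h l).mul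
      (isBigO_sub_of_isBigO_sub_sub hl iterate).norm_norm)).add iterate).congr_left fun i => ?_
    rw [rk4Iter, rk4Iter, ← mul_div_assoc, mul_div_right_comm, one_div_mul_eq_div]
    abel

theorem dcA_sub_const (w : ℕ → E) (x : E) : dcA (fun i => w i - x) = dcA w := by
  simp only [dcA]
  module

theorem dcB_sub_const (w : ℕ → E) (x : E) : dcB (fun i => w i - x) = dcB w := by
  simp only [dcB]
  module

theorem isBigO_dcStep_sub_sub (hF : ∀ s ∈ Icc 0 T, LipschitzWith K (F s))
    (hl : ∀ᶠ i in l, (t i, h i) ∈ stepTriangle T) (x y : ι → E) :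
    (fun i => dcStep F (t i) (h i) (x i) - dcStep F (t i) (h i) (y i) - (x i - y i))
      =O[l] fun i => h i * ‖x i - y i‖ := by
  have iterates (j : ℕ) (hj : j ≤ 5) := isBigO_rk4Iter_sub_sub hF hl x y hj
  have correctionA := isBigO_dcA iterates
  have correctionB := isBigO_dcB iterates
  simp only [Nat.cast_ofNat, dcA_sub_const, dcA_sub] at correctionA
  simp only [Nat.cast_ofNat, dcB_sub_const, dcB_sub] at correctionB
  have slope := isBigO_slope_sub hF hl unitInterval.zero_mem (isBigO_refl (fun i => x i - y i) l)
  simp only [zero_mul, add_zero] at slope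
  have midpoint := isBigO_sub_of_isBigO_sub_sub hl
    (v := fun i => x i + (h i / 2) • F (t i) (x i) + dcB (rk4Iter F (t i) (h i / 5) (x i)))
    (w := fun i => y i + (h i / 2) • F (t i) (y i) + dcB (rk4Iter F (t i) (h i / 5) (y i)))
    (((isBigO_add_step_smul_sub_sub h (1 / 2) slope).add correctionB).congr_left fun i => by module)
  have midpoint_slope := isBigO_slope_sub hF hl half_mem_unitInterval midpoint
  refine ((isBigO_add_step_smul_sub_sub h 1 midpoint_slope).add correctionA).congr_left fun i => ?_
  simp only [dcStep, one_div_mul_eq_div]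
  module

end Stability

section Convergence

open Set Filter Asymptotics Topology

theorem discrete_gronwall_of_lt {e : ℕ → ℝ} {c δ : ℝ} {N n : ℕ} (he : ∀ m, 0 ≤ e m) (hc : 0 ≤ c)
    (hδ : 0 ≤ δ) (step : ∀ m < N, e (m + 1) ≤ (1 + c) * e m + δ) (hn : n ≤ N) :
    e n ≤ (e 0 + n * δ) * Real.exp (n * c) := by
  have capped_step (m : ℕ) (_ : 0 ≤ m) : e (min (m + 1) N) ≤ (1 + c) * e (min m N) + δ := by
    rcases lt_or_ge m N with hm | hm
    · simpa [min_eq_left hm.le, min_eq_left (Nat.succ_le_of_lt hm)] using step m hm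
    · rw [min_eq_right hm, min_eq_right (hm.trans m.le_succ)]
      nlinarith [mul_nonneg hc (he N)]
  simpa [hn] using discrete_gronwall (u := fun m => e (min m N)) (he _) capped_step
    (fun _ _ => hc) (fun _ _ => hδ) n.zero_le

variable {E : Type*} [NormedAddCommGroup E] {T : ℝ} {Φ : ℝ → ℝ → E → E} {u : ℝ → E}

theorem exists_norm_sub_le_of_isBigO_increment
    (stable : (fun z : (ℝ × ℝ) × E × E => Φ z.1.1 z.1.2 z.2.1 - Φ z.1.1 z.1.2 z.2.2
      - (z.2.1 - z.2.2)) =O[𝓟 (stepTriangle T ×ˢ univ)] fun z => z.1.2 * ‖z.2.1 - z.2.2‖) :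
    ∃ L > 0, ∀ p ∈ stepTriangle T, ∀ x y,
      ‖Φ p.1 p.2 x - Φ p.1 p.2 y‖ ≤ (1 + L * p.2) * ‖x - y‖ := by
  obtain ⟨L, hL, bound⟩ := stable.exists_pos
  rw [isBigOWith_principal] at bound
  refine ⟨L, hL, fun p hp x y => ?_⟩
  have increment := bound (p, x, y) ⟨hp, mem_univ _⟩
  rw [norm_mul, norm_norm, Real.norm_of_nonneg hp.2.1] at increment
  calc ‖Φ p.1 p.2 x - Φ p.1 p.2 y‖
      ≤ ‖Φ p.1 p.2 x - Φ p.1 p.2 y - (x - y)‖ + ‖x - y‖ := norm_le_norm_sub_add _ _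
    _ ≤ L * (p.2 * ‖x - y‖) + ‖x - y‖ := by gcongr
    _ = (1 + L * p.2) * ‖x - y‖ := by ring

theorem exists_norm_le_of_isBigO_stepFilter {f : ℝ × ℝ → E} {m : ℕ}
    (hf : f =O[stepFilter T] fun p => p.2 ^ m) :
    ∃ C > 0, ∃ k0 > 0, ∀ p ∈ stepTriangle T, p.2 ≤ k0 → ‖f p‖ ≤ C * p.2 ^ m := by
  obtain ⟨C, hC, bound⟩ := hf.exists_pos
  rw [isBigOWith_iff, stepFilter, inf_comm, eventually_inf_principal, eventually_comap,
    Metric.eventually_nhds_iff] at bound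
  obtain ⟨ε, hε, bound⟩ := bound
  refine ⟨C, hC, ε / 2, half_pos hε, fun p hp hpε => ?_⟩
  have step_lt : dist p.2 0 < ε := by
    rw [Real.dist_eq, sub_zero, abs_of_nonneg hp.2.1]
    exact hpε.trans_lt (half_lt_self hε)
  simpa [abs_of_nonneg hp.2.1] using bound step_lt p rfl hp

theorem exists_oneStep_error_le (hT : 0 < T) {m : ℕ}
    (consistent : (fun p : ℝ × ℝ => Φ p.1 p.2 (u p.1) - u (p.1 + p.2))
      =O[stepFilter T] fun p => p.2 ^ (m + 1))
    (stable : (fun z : (ℝ × ℝ) × E × E => Φ z.1.1 z.1.2 z.2.1 - Φ z.1.1 z.1.2 z.2.2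
      - (z.2.1 - z.2.2)) =O[𝓟 (stepTriangle T ×ˢ univ)] fun z => z.1.2 * ‖z.2.1 - z.2.2‖)
    {v : ℝ → ℕ → E} (v_zero : ∀ k, v k 0 = u 0)
    (v_succ : ∀ k n, v k (n + 1) = Φ (n * k) k (v k n)) :
    ∃ C > 0, ∃ k0 > 0, ∀ N : ℕ, 0 < N → T / N ≤ k0 →
      ∀ n : ℕ, n ≤ N → ‖v (T / N) n - u (n * (T / N))‖ ≤ C * (T / N) ^ m := by
  obtain ⟨L, hL, stability⟩ := exists_norm_sub_le_of_isBigO_increment stable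
  obtain ⟨C, hC, k0, hk0, consistency⟩ := exists_norm_le_of_isBigO_stepFilter consistent
  refine ⟨T * C * Real.exp (T * L), by positivity, k0, hk0, fun N hN hk n hn => ?_⟩
  set k := T / N with k_def
  have hk_nonneg : 0 ≤ k := by positivity
  have N_mul_k : N * k = T := by rw [k_def]; field_simp
  have error_step (j : ℕ) (hj : j < N) : ‖v k (j + 1) - u ((j + 1 : ℕ) * k)‖
      ≤ (1 + L * k) * ‖v k j - u (j * k)‖ + C * k ^ (m + 1) := by
    have node_add : ((j + 1 : ℕ) : ℝ) * k = j * k + k := by push_cast; ring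
    have mem_triangle : (j * k, k) ∈ stepTriangle T := by
      refine ⟨by positivity, hk_nonneg, ?_⟩
      rw [← node_add, ← N_mul_k]
      gcongr
      exact hj
    rw [v_succ, node_add]
    exact (norm_sub_le_norm_sub_add_norm_sub _ (Φ (j * k) k (u (j * k))) _).trans
      (add_le_add (stability _ mem_triangle _ _) (consistency _ mem_triangle hk))
  have gronwall := discrete_gronwall_of_lt (e := fun j => ‖v k j - u (j * k)‖)
    (fun _ => norm_nonneg _) (by positivity) (by positivity) error_step hn
  calc ‖v k n - u (n * k)‖ ≤ n * (C * k ^ (m + 1)) * Real.exp (n * (L * k)) := by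
        simpa [v_zero] using gronwall
    _ ≤ N * (C * k ^ (m + 1)) * Real.exp (N * (L * k)) := by gcongr
    _ = N * k * C * Real.exp (N * k * L) * k ^ m := by ring_nf
    _ = T * C * Real.exp (T * L) * k ^ m := by rw [N_mul_k]

end Convergence

theorem dc6rk24_order_six_general {E : Type*} [NormedAddCommGroup E] [NormedSpace ℝ E]
    {T : ℝ} (hT : 0 < T) {F : ℝ → E → E} {μ : ℝ}
    (hF : ContDiffOn ℝ 6 (Function.uncurry F) (Set.Icc 0 T ×ˢ (Set.univ : Set E)))
    (hLip : ∀ t ∈ Set.Icc 0 T, ∀ x y : E, ‖F t x - F t y‖ ≤ μ * ‖x - y‖)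
    {u : ℝ → E} (hu : ContDiffOn ℝ 7 u (Set.Icc 0 T))
    (hode : ∀ t ∈ Set.Icc 0 T, HasDerivWithinAt u (F t (u t)) (Set.Icc 0 T) t) :
    ∃ C > 0, ∃ k0 > 0, ∀ N : ℕ, 0 < N → T / N ≤ k0 →
      ∀ n : ℕ, n ≤ N →
        ‖dcSeq F (u 0) (T / N) n - u ((n : ℝ) * (T / N))‖ ≤ C * (T / N) ^ 6 := by
  have lipschitz : ∀ t ∈ Set.Icc 0 T, LipschitzWith μ.toNNReal (F t) := fun t ht =>
    .of_dist_le' fun x y => by simpa only [dist_eq_norm] using hLip t ht x y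
  obtain ⟨A, B, hA, hB, expansion⟩ := exists_quadratic_expansion_along isCompact_Icc
    (uniqueDiffOn_Icc hT) (n := 3) hF (hu.of_le (by norm_num))
  have solution : IsExpandedSolution T F u A B :=
    ⟨hT, hu, hA, hB, fun s hs => ((hode s hs).derivWithin (uniqueDiffOn_Icc hT s hs)).symm,
      expansion⟩
  have triangle : ∀ᶠ z : (ℝ × ℝ) × E × E in .principal (stepTriangle T ×ˢ Set.univ),
      (z.1.1, z.1.2) ∈ stepTriangle T :=
    Filter.eventually_principal.2 fun _ hz => hz.1
  exact exists_oneStep_error_le (Φ := dcStep F) hT (solution.isBigO_dcStep_sub lipschitz)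
    (isBigO_dcStep_sub_sub lipschitz triangle _ _) (fun _ => rfl) fun _ _ => rfl

/-- **Theorem 4.1: convergence with order six of DC6RK2/4.**
Let `F ∈ C^6([0,T] × X, X)` be Lipschitz in its second variable with constant `μ ≥ 0`,
and suppose the IVP `u' = F(t,u)`, `u(0) = u₀` has a (unique) solution
`u ∈ C^7([0,T], X)`. Then there are constants `C > 0` and `k₀ > 0` such that for every
positive integer `N` with `k = T/N ≤ k₀`, the DC6RK2/4 sequence satisfies
`‖u^{6,n} - u(t_n)‖ ≤ C k^6` for all `n = 0, …, N`. -/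
theorem dc6rk24_order_six
    (T : ℝ) (hT : 0 < T) (F : ℝ → X → X) (μ : ℝ) (hμ : 0 ≤ μ)
    (hF : ContDiffOn ℝ 6 (Function.uncurry F) (Set.Icc 0 T ×ˢ (Set.univ : Set X)))
    (hLip : ∀ t ∈ Set.Icc 0 T, ∀ x y : X, ‖F t x - F t y‖ ≤ μ * ‖x - y‖)
    (u : ℝ → X) (u0 : X)
    (hu : ContDiffOn ℝ 7 u (Set.Icc 0 T))
    (hu0 : u 0 = u0)
    (hode : ∀ t ∈ Set.Icc 0 T, HasDerivAt u (F t (u t)) t) :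
    ∃ C > 0, ∃ k0 > 0, ∀ N : ℕ, 0 < N → T / N ≤ k0 →
      ∀ n : ℕ, n ≤ N →
        ‖dcSeq F u0 (T / N) n - u ((n : ℝ) * (T / N))‖ ≤ C * (T / N) ^ 6 := by
  subst hu0
  exact dc6rk24_order_six_general hT hF hLip hu fun t ht => (hode t ht).hasDerivWithinAt
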